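/- Let 𝒞 be a small category, (−⊗I) elementary homotopy data on Psh(𝒞), and T a monad on Psh(𝒞) satisfying (M1) and (M2) with generating set of units 𝔊. If f : X → Y is a T-weak equivalence, then f is a weak equivalence in the 𝔊-generated sense: for every naively fibrant presheaf A (with respect to 𝔄_I(𝔊)), the induced map [f,A] : [Y,A] → [X,A] is a bijection. -/

import Mathlib

open CategoryTheory Category Limits

universe w v u

/-- The category of presheaves on a small category. -/
abbrev Psh (C : Type u) [SmallCategory C] := Cᵒᵖ ⥤ Type u

namespace PaperMSMonad

/-- `f` is a retract of `g` in the arrow category. -/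
def IsRetractOf {D : Type*} [Category D] {X Y Z W : D} (f : X ⟶ Y) (g : Z ⟶ W) : Prop :=
  ∃ (i : X ⟶ Z) (r : Z ⟶ X) (i' : Y ⟶ W) (r' : W ⟶ Y),
    i ≫ r = 𝟙 X ∧ i' ≫ r' = 𝟙 Y ∧ i ≫ g = f ≫ i' ∧ g ≫ r' = r ≫ f

/-- The cocone on the restriction of `F : J ⥤ D` to `Set.Iio j`, with point `F.obj j`. -/
@[simps]
def coconeLT {D : Type*} [Category D] {J : Type w} [Preorder J] (F : J ⥤ D) (j : J) :
    Cocone ((Monotone.functor (f := (Subtype.val : Set.Iio j → J))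
      (fun _ _ h => h)) ⋙ F) where
  pt := F.obj j
  ι :=
    { app := fun i => F.map (homOfLE i.2.le)
      naturality := fun i i' g => by
        dsimp [Monotone.functor]
        rw [Category.comp_id, ← F.map_comp]
        rfl }

/-- A morphism property is stable under transfinite composition if, for every well-ordered
type `J`, every functor `F : J ⥤ D` which is continuous at limit stages and whose successor
maps all lie in `W`, and every colimit cocone on `F`, the component of the cocone at the
bottom element lies in `W`. -/
def StableUnderTransfiniteComposition {D : Type*} [Category D]
    (W : MorphismProperty D) : Prop :=
  ∀ (J : Type w) (_ : LinearOrder J) (_ : SuccOrder J) (_ : OrderBot J) (_ : WellFoundedLT J)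
    (F : J ⥤ D),
    (∀ (j : J), ¬IsMax j → W (F.map (homOfLE (Order.le_succ j)))) →
    (∀ (j : J), Order.IsSuccLimit j → Nonempty (IsColimit (coconeLT F j))) →
    ∀ (c : Cocone F), Nonempty (IsColimit c) → W (c.ι.app ⊥)

/-- A class of morphisms is weakly saturated if it contains all isomorphisms and is closed
under pushout (cobase change), retracts and transfinite composition. -/
def IsWeaklySaturated {D : Type*} [Category D] (W : MorphismProperty D) : Prop :=
  (∀ ⦃X Y : D⦄ (f : X ⟶ Y), IsIso f → W f) ∧
  (∀ ⦃Z X Y P : D⦄ (t : Z ⟶ X) (f : Z ⟶ Y) (g : X ⟶ P) (b : Y ⟶ P),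
      IsPushout t f g b → W f → W g) ∧
  (∀ ⦃X Y Z W' : D⦄ (f : X ⟶ Y) (g : Z ⟶ W'), IsRetractOf f g → W g → W f) ∧
  StableUnderTransfiniteComposition.{w} W

/-- The saturated class generated by `S`: the smallest weakly saturated class containing `S`. -/
def SaturatedClassGen {D : Type*} [Category D] (S : MorphismProperty D) :
    MorphismProperty D :=
  fun _ _ f => ∀ W : MorphismProperty D, IsWeaklySaturated.{w} W → S ≤ W → W f

/-- The maps having the right lifting property with respect to all maps in `S`. -/
def RLP {D : Type*} [Category D] (S : MorphismProperty D) : MorphismProperty D :=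
  fun _ _ g => ∀ ⦃A B : D⦄ (f : A ⟶ B), S f → HasLiftingProperty f g

/-- The maps having the left lifting property with respect to all maps in `S`. -/
def LLP {D : Type*} [Category D] (S : MorphismProperty D) : MorphismProperty D :=
  fun _ _ f => ∀ ⦃A B : D⦄ (g : A ⟶ B), S g → HasLiftingProperty f g

end PaperMSMonad

namespace PaperMSMonad

variable {C : Type u} [SmallCategory C]

/-- Elementary homotopy data on the category of presheaves on `C`: a functorial cylinder
`X ↦ X ⊗ I` with endpoint inclusions `∂⁰`, `∂¹` and projection `σ`, such that
`[∂⁰,∂¹] : X + X → X ⊗ I` is always a monomorphism, the cylinder functor preserves small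
colimits and monomorphisms, and the endpoint naturality squares at monomorphisms
are pullbacks. -/
structure ElementaryHomotopyData (C : Type u) [SmallCategory C] where
  cyl : Psh C ⥤ Psh C
  d0 : 𝟭 (Psh C) ⟶ cyl
  d1 : 𝟭 (Psh C) ⟶ cyl
  σ : cyl ⟶ 𝟭 (Psh C)
  d0_σ : ∀ X : Psh C, d0.app X ≫ σ.app X = 𝟙 X
  d1_σ : ∀ X : Psh C, d1.app X ≫ σ.app X = 𝟙 X
  mono_pair : ∀ X : Psh C, Mono (coprod.desc (d0.app X) (d1.app X))
  preservesColimits : PreservesColimitsOfSize.{u, u} cyl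
  preservesMono : ∀ ⦃K L : Psh C⦄ (j : K ⟶ L), Mono j → Mono (cyl.map j)
  isPullback0 : ∀ ⦃K L : Psh C⦄ (j : K ⟶ L), Mono j →
    IsPullback j (d0.app K) (d0.app L) (cyl.map j)
  isPullback1 : ∀ ⦃K L : Psh C⦄ (j : K ⟶ L), Mono j →
    IsPullback j (d1.app K) (d1.app L) (cyl.map j)

namespace ElementaryHomotopyData

variable (E : ElementaryHomotopyData C)

/-- `f ≃ g`: there is a homotopy `θ : X ⊗ I ⟶ Y` from `f` to `g`. -/
def Htpy {X Y : Psh C} (f g : X ⟶ Y) : Prop :=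
  ∃ θ : E.cyl.obj X ⟶ Y, E.d0.app X ≫ θ = f ∧ E.d1.app X ≫ θ = g

/-- `f ≃* g`: the equivalence relation generated by the homotopy relation. -/
def HtpyStar {X Y : Psh C} (f g : X ⟶ Y) : Prop :=
  Relation.EqvGen (fun a b : X ⟶ Y => E.Htpy a b) f g

/-- `[X,Y]`: the quotient of `Hom(X,Y)` by the equivalence relation generated by homotopy. -/
def HQ (X Y : Psh C) :=
  Quot (fun a b : X ⟶ Y => E.Htpy a b)

/-- The class of `f : X ⟶ Y` in `[X,Y]`. -/
def HQ.mk {X Y : Psh C} (f : X ⟶ Y) : E.HQ X Y :=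
  Quot.mk _ f

/-- `[f,A] : [Y,A] → [X,A]`, precomposition with `f` on homotopy classes. -/
def precomp {X Y A : Psh C} (f : X ⟶ Y) : E.HQ Y A → E.HQ X A :=
  Quot.lift (fun h => HQ.mk E (f ≫ h)) (fun h h' hh => Quot.sound (by
    obtain ⟨θ, h0, h1⟩ := hh
    exact ⟨E.cyl.map f ≫ θ,
      by rw [← Category.assoc, ← E.d0.naturality, Functor.id_map, Category.assoc, h0],
      by rw [← Category.assoc, ← E.d1.naturality, Functor.id_map, Category.assoc, h1]⟩))

/-- For a monomorphism `j : K ⟶ L` the canonical map `K⊗I ∪ L⊗{0} ⟶ L⊗I`. -/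
noncomputable def gluing0 {K L : Psh C} (j : K ⟶ L) :
    pushout (E.d0.app K) j ⟶ E.cyl.obj L :=
  pushout.desc (E.cyl.map j) (E.d0.app L) (by rw [← E.d0.naturality j]; rfl)

/-- For a monomorphism `j : K ⟶ L` the canonical map `K⊗I ∪ L⊗{1} ⟶ L⊗I`. -/
noncomputable def gluing1 {K L : Psh C} (j : K ⟶ L) :
    pushout (E.d1.app K) j ⟶ E.cyl.obj L :=
  pushout.desc (E.cyl.map j) (E.d1.app L) (by rw [← E.d1.naturality j]; rfl)

/-- For a map `j : K ⟶ L` the canonical map `K⊗I ∪ L⊗∂I ⟶ L⊗I`. -/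
noncomputable def gluingBoth {K L : Psh C} (j : K ⟶ L) :
    pushout (coprod.desc (E.d0.app K) (E.d1.app K)) (coprod.map j j) ⟶ E.cyl.obj L :=
  pushout.desc (E.cyl.map j) (coprod.desc (E.d0.app L) (E.d1.app L)) (by
    apply coprod.hom_ext
    · rw [coprod.inl_desc_assoc, coprod.inl_map_assoc, coprod.inl_desc]
      exact (E.d0.naturality j).symm
    · rw [coprod.inr_desc_assoc, coprod.inr_map_assoc, coprod.inr_desc]
      exact (E.d1.naturality j).symm)

/-- The class `Λ⁰_I(S)`. -/
inductive Lambda0 (E : ElementaryHomotopyData C) (S : MorphismProperty (Psh C)) :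
    ∀ ⦃X Y : Psh C⦄, (X ⟶ Y) → Prop
  | ofS ⦃X Y : Psh C⦄ (f : X ⟶ Y) : S f → Lambda0 E S f
  | glue0 ⦃K L : Psh C⦄ (j : K ⟶ L) : Mono j → Lambda0 E S (E.gluing0 j)
  | glue1 ⦃K L : Psh C⦄ (j : K ⟶ L) : Mono j → Lambda0 E S (E.gluing1 j)

/-- The operation `𝚲(-)` applied to a class of maps. -/
inductive LambdaStep (E : ElementaryHomotopyData C) (P : MorphismProperty (Psh C)) :
    ∀ ⦃X Y : Psh C⦄, (X ⟶ Y) → Prop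
  | glue ⦃K L : Psh C⦄ (j : K ⟶ L) : P j → LambdaStep E P (E.gluingBoth j)

/-- The class `Λⁿ_I(S)`. -/
def LambdaN (S : MorphismProperty (Psh C)) : ℕ → MorphismProperty (Psh C)
  | 0 => Lambda0 E S
  | (n + 1) => LambdaStep E (LambdaN S n)

/-- The class `Λ_I(S) = ⋃ₙ Λⁿ_I(S)`. -/
def Lambda (S : MorphismProperty (Psh C)) : MorphismProperty (Psh C) :=
  fun _ _ f => ∃ n : ℕ, LambdaN E S n f

/-- The class `𝔄_I(S)` of anodyne extensions: maps with the left lifting property with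
respect to every map having the right lifting property with respect to `Λ_I(S)`. -/
def Anodyne (S : MorphismProperty (Psh C)) : MorphismProperty (Psh C) :=
  LLP (RLP (E.Lambda S))

/-- `A` is naively fibrant if `A ⟶ 1` has the right lifting property with respect to all
anodyne extensions. -/
def NaivelyFibrant (S : MorphismProperty (Psh C)) (A : Psh C) : Prop :=
  RLP (E.Anodyne S) (terminal.from A)

/-- A map `f : X ⟶ Y` is a `T`-weak equivalence if `[f,A] : [Y,A] → [X,A]` is a bijection
for every `T`-algebra `A`. -/
def TWeakEquiv (T : Monad (Psh C)) : MorphismProperty (Psh C) :=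
  fun _ _ f => ∀ A : T.Algebra, Function.Bijective (E.precomp (A := A.A) f)

end ElementaryHomotopyData

/-- The generating set of units `𝔊 = {η_{Gⁱ} : Gⁱ ⟶ T(Gⁱ)}`. -/
inductive unitsOf (T : Monad (Psh C)) {ι : Type u} (G : ι → Psh C) :
    ∀ ⦃X Y : Psh C⦄, (X ⟶ Y) → Prop
  | mk (i : ι) : unitsOf T G (T.η.app (G i))

end PaperMSMonad

namespace PaperMSMonad

open CategoryTheory Category Limits

/-! Since `η_A : A ⟶ TA` lies in the saturated class generated by `𝔊` and `A ⟶ 1` has the right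
lifting property with respect to `𝔊`, the identity of `A` extends along `η_A`, so `A` is a retract
of the free algebra `TA`. Hence `[f,A]` is a retract of the bijection `[f,TA]`, and bijections are
stable under retracts. -/

lemma isWeaklySaturated_of_isStable {D : Type*} [Category D] (W : MorphismProperty D)
    [W.IsStableUnderCobaseChange] [W.IsStableUnderRetracts]
    [MorphismProperty.IsStableUnderTransfiniteComposition.{w} W] : IsWeaklySaturated.{w} W := by
  -- Mathlib infers that `W` is multiplicative from stability in the fixed universe `0`.
  have : MorphismProperty.IsStableUnderTransfiniteComposition.{0} W := .shrink₀.{w} W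
  refine ⟨fun _ _ f _ => W.of_isIso f, fun _ _ _ _ _ _ _ _ sq hf => W.of_isPushout sq hf, ?_, ?_⟩
  · rintro _ _ _ _ f g ⟨i, r, i', r', hir, hir', hi, hr⟩ hg
    exact W.of_retract (f := f) (g := g)
      { i := Arrow.homMk i i' hi
        r := Arrow.homMk r r' hr.symm
        retract := by ext <;> assumption } hg
  · intro J _ _ _ _ F hsucc hlim c ⟨hc⟩
    have : F.IsWellOrderContinuous := ⟨hlim⟩
    exact W.transfiniteCompositionsOfShape_le J _
      ⟨{ F := F, isoBot := Iso.refl _, incl := c.ι, isColimit := hc, map_mem := hsucc }⟩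

lemma saturatedClassGen_le_llp_rlp {D : Type*} [Category D] (S : MorphismProperty D) :
    SaturatedClassGen.{w} S ≤ LLP (RLP S) :=
  fun _ _ _ hf => hf S.rlp.llp (isWeaklySaturated_of_isStable _) S.le_llp_rlp

lemma isSplitMono_of_hasLiftingProperty_terminal {D : Type*} [Category D] [HasTerminal D]
    {A B : D} (i : A ⟶ B) [HasLiftingProperty i (terminal.from A)] : IsSplitMono i := by
  have sq : CommSq (𝟙 A) i (terminal.from A) (terminal.from B) := ⟨Subsingleton.elim _ _⟩
  exact ⟨⟨⟨sq.lift, sq.fac_left⟩⟩⟩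

namespace ElementaryHomotopyData

variable {C : Type u} [SmallCategory C] (E : ElementaryHomotopyData C)

lemma le_anodyne (S : MorphismProperty (Psh C)) : S ≤ E.Anodyne S :=
  fun _ _ i hi _ _ _ hp => hp i ⟨0, .ofS i hi⟩

variable {E} in
lemma NaivelyFibrant.rlp {S : MorphismProperty (Psh C)} {A : Psh C} (hA : E.NaivelyFibrant S A) :
    RLP S (terminal.from A) :=
  MorphismProperty.antitone_rlp (E.le_anodyne S) _ hA

/-- The functor `A ↦ [X,A]` of homotopy classes of maps out of `X`, which turns retracts of
presheaves into retracts of sets. -/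
def homotopyClasses (X : Psh C) : Psh C ⥤ Type u where
  obj A := E.HQ X A
  map g := ↾Quot.map (· ≫ g) fun _ _ ⟨θ, h₀, h₁⟩ =>
    ⟨θ ≫ g, by rw [← h₀, assoc], by rw [← h₁, assoc]⟩
  map_id A := by
    ext ⟨h⟩
    exact congrArg (HQ.mk E) (comp_id h)
  map_comp g g' := by
    ext ⟨h⟩
    exact congrArg (HQ.mk E) (assoc h g g').symm

/-- The maps `[f,A] : [Y,A] → [X,A]` as a natural transformation in `A`: a retract of `A` therefore
induces a retract of maps. -/
def homotopyClassesPrecomp {X Y : Psh C} (f : X ⟶ Y) :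
    E.homotopyClasses Y ⟶ E.homotopyClasses X where
  app _ := ↾E.precomp f
  naturality _ _ g := by
    ext ⟨h⟩
    exact congrArg (HQ.mk E) (assoc f h g).symm

variable {E}

lemma bijective_precomp_of_retract {X Y : Psh C} {f : X ⟶ Y} {A B : Psh C} (r : Retract A B)
    (hB : Function.Bijective (E.precomp (A := B) f)) :
    Function.Bijective (E.precomp (A := A) f) :=
  (isIso_iff_bijective _).mp <| (MorphismProperty.isomorphisms (Type u)).of_retract
    ((E.homotopyClassesPrecomp f).retractArrowApp r) ((isIso_iff_bijective _).mpr hB)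

end ElementaryHomotopyData

theorem tWeakEquiv_isWeakEquiv_general {C : Type u} [SmallCategory C]
    (E : ElementaryHomotopyData C) (T : Monad (Psh C)) (S : MorphismProperty (Psh C))
    {A : Psh C} (hη : SaturatedClassGen.{w} S (T.η.app A)) (hA : RLP S (terminal.from A))
    {X Y : Psh C} {f : X ⟶ Y} (hf : E.TWeakEquiv T f) :
    Function.Bijective (E.precomp (A := A) f) := by
  have : HasLiftingProperty (T.η.app A) (terminal.from A) :=
    saturatedClassGen_le_llp_rlp S _ hη _ hA
  have : IsSplitMono (T.η.app A) := isSplitMono_of_hasLiftingProperty_terminal (A := A) _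
  let retract : Retract A (T.obj A) := ⟨T.η.app A, retraction (T.η.app A), IsSplitMono.id _⟩
  exact ElementaryHomotopyData.bijective_precomp_of_retract retract (hf (T.free.obj A))

/-- Lemma: under (M1) and (M2), every `T`-weak equivalence is a weak equivalence in the
`𝔊`-generated sense: `[f,A] : [Y,A] → [X,A]` is bijective for every naively fibrant `A`. -/
theorem tWeakEquiv_isWeakEquiv {C : Type u} [SmallCategory C]
    (E : ElementaryHomotopyData C) (T : Monad (Psh C))
    (hM1a : ∀ ⦃K L : Psh C⦄ (j : K ⟶ L), CategoryTheory.Mono j →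
      CategoryTheory.Mono (T.toFunctor.map j))
    (hM1b : ∀ X : Psh C, CategoryTheory.Mono (T.η.app X))
    {ι : Type u} (G : ι → Psh C)
    (hM2 : ∀ X : Psh C, SaturatedClassGen.{u} (unitsOf T G) (T.η.app X))
    {X Y : Psh C} (f : X ⟶ Y) (hf : E.TWeakEquiv T f)
    (A : Psh C) (hA : E.NaivelyFibrant (unitsOf T G) A) :
    Function.Bijective (E.precomp (A := A) f) := by
  exact tWeakEquiv_isWeakEquiv_general E T (unitsOf T G) (hM2 A) hA.rlp hf

end PaperMSMonad
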